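/- Let Γ be a finite extensive-form game with perfect recall. If (β*, μ*) is a semi-sequential equilibrium, then β* is a Nash equilibrium in behavioral strategies. -/

import Mathlib

open scoped Classical

noncomputable section

/-- A finite extensive-form game.  Actions are labelled by natural numbers drawn from the
finite pool `actFinset`; a history is the list of actions taken so far; players are `Fin n`
and `P h = none` means that the chance player moves after `h`.  The information sets of
player `i` are `Info i j` for `j < m i`, and `infoIdx h` is the index of the information
set containing a nonterminal history `h` at which some player moves.  Payoffs `u i h` are
relevant on terminal histories. -/
structure EFG where
  n : ℕ
  actFinset : Finset ℕ
  H : Finset (List ℕ)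
  P : List ℕ → Option (Fin n)
  fc : List ℕ → ℕ → ℝ
  m : Fin n → ℕ
  Info : Fin n → ℕ → Finset (List ℕ)
  infoIdx : List ℕ → ℕ
  u : Fin n → List ℕ → ℝ
  empty_mem : ([] : List ℕ) ∈ H
  prefixClosed : ∀ h ∈ H, ∀ h' : List ℕ, h' <+: h → h' ∈ H
  act_mem : ∀ (h : List ℕ) (a : ℕ), h ++ [a] ∈ H → a ∈ actFinset
  fc_nonneg : ∀ h a, 0 ≤ fc h a
  fc_sum : ∀ h ∈ H, P h = none → (∃ a, h ++ [a] ∈ H) →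
    ∑ a ∈ actFinset.filter (fun a => h ++ [a] ∈ H), fc h a = 1
  info_spec : ∀ (i : Fin n) (j : ℕ) (h : List ℕ), j < m i →
    (h ∈ Info i j ↔ h ∈ H ∧ P h = some i ∧ (∃ a, h ++ [a] ∈ H) ∧ infoIdx h = j)
  infoIdx_lt : ∀ (i : Fin n), ∀ h ∈ H, P h = some i → (∃ a, h ++ [a] ∈ H) → infoIdx h < m i
  info_nonempty : ∀ (i : Fin n) (j : ℕ), j < m i → (Info i j).Nonempty
  info_actions : ∀ (i : Fin n) (j : ℕ), j < m i → ∀ h ∈ Info i j, ∀ h' ∈ Info i j,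
    ∀ a : ℕ, (h ++ [a] ∈ H ↔ h' ++ [a] ∈ H)
  act_unique : ∀ (h h' : List ℕ) (a : ℕ), h ∈ H → h' ∈ H → h ++ [a] ∈ H → h' ++ [a] ∈ H →
    P h = P h' ∧ infoIdx h = infoIdx h'

namespace EFG

/-- Behavioral strategy profiles (player, information-set index, action ↦ probability). -/
abbrev Profile (G : EFG) : Type := Fin G.n → ℕ → ℕ → ℝ

/-- Belief systems (player, information-set index, history ↦ probability). -/
abbrev Belief (G : EFG) : Type := Fin G.n → ℕ → List ℕ → ℝ

variable (G : EFG)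

/-- The set `Z` of terminal histories. -/
def Zset : Finset (List ℕ) := G.H.filter fun h => ∀ a : ℕ, h ++ [a] ∉ G.H

/-- The set `A(h)` of actions available after a history. -/
def A (h : List ℕ) : Finset ℕ := G.actFinset.filter fun a => h ++ [a] ∈ G.H

/-- The common action set `A(I_i^j)` of an information set. -/
def infoA (i : Fin G.n) (j : ℕ) : Finset ℕ := (G.Info i j).sup fun h => G.A h

/-- A behavioral strategy of player `i`: a probability distribution on `A(I_i^j)` for
each information set `I_i^j`. -/
def IsBehStrategy (i : Fin G.n) (b : ℕ → ℕ → ℝ) : Prop :=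
  ∀ j < G.m i, (∀ a ∈ G.infoA i j, 0 ≤ b j a) ∧ ∑ a ∈ G.infoA i j, b j a = 1

/-- A behavioral strategy profile. -/
def IsBehProfile (β : G.Profile) : Prop := ∀ i : Fin G.n, G.IsBehStrategy i (β i)

/-- The probability of action `a` at history `h`: the chance distribution if the chance
player moves, and the mover's behavioral strategy otherwise. -/
def moveProb (β : G.Profile) (h : List ℕ) (a : ℕ) : ℝ :=
  (G.P h).elim (G.fc h a) fun i => β i (G.infoIdx h) a

/-- Player `i`'s record `X_i` of the information sets he encounters along a history and the
actions he takes at them, accumulated starting from the prefix `pre`. -/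
def recordFrom (i : Fin G.n) : List ℕ → List ℕ → List (ℕ × ℕ)
  | _, [] => []
  | pre, b :: rest =>
    (if G.P pre = some i then [(G.infoIdx pre, b)] else []) ++ recordFrom i (pre ++ [b]) rest

/-- Perfect recall. -/
def PerfectRecall : Prop :=
  ∀ (i : Fin G.n) (j : ℕ), j < G.m i →
    ∀ h ∈ G.Info i j, ∀ h' ∈ G.Info i j, G.recordFrom i [] h = G.recordFrom i [] h'

/-- Product of the move probabilities along `rest`, continuing from the prefix `pre`. -/
def prodAlong (β : G.Profile) : List ℕ → List ℕ → ℝ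
  | _, [] => 1
  | pre, b :: rest => G.moveProb β pre b * prodAlong β (pre ++ [b]) rest

/-- `ω(h|β)`: the probability that the moves along `h` are played under `β`. -/
def omega (β : G.Profile) (h : List ℕ) : ℝ := G.prodAlong β [] h

/-- `ω(I_i^j|β)`. -/
def omegaInfo (i : Fin G.n) (j : ℕ) (β : G.Profile) : ℝ := ∑ h ∈ G.Info i j, G.omega β h

/-- Product of the move probabilities along `rest` from `pre`, disregarding player `i`'s
own moves. -/
def prodAlongNot (i : Fin G.n) (β : G.Profile) : List ℕ → List ℕ → ℝ
  | _, [] => 1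
  | pre, b :: rest =>
    (if G.P pre = some i then 1 else G.moveProb β pre b) * prodAlongNot i β (pre ++ [b]) rest

/-- `S^i(h|β)`: probability of the moves along `h`, disregarding player `i`'s own moves. -/
def Sh (i : Fin G.n) (β : G.Profile) (h : List ℕ) : ℝ := G.prodAlongNot i β [] h

/-- `S^i(I_i^j|β)`. -/
def SInfo (i : Fin G.n) (j : ℕ) (β : G.Profile) : ℝ := ∑ h ∈ G.Info i j, G.Sh i β h

/-- Product of the move probabilities along `rest` from `pre`, with the factor at prefixes
lying in `I_i^j` omitted. -/
def prodAlongSkip (i : Fin G.n) (j : ℕ) (β : G.Profile) : List ℕ → List ℕ → ℝ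
  | _, [] => 1
  | pre, b :: rest =>
    (if pre ∈ G.Info i j then 1 else G.moveProb β pre b) * prodAlongSkip i j β (pre ++ [b]) rest

/-- `q ∈ M(a, I_i^j)`: `I_i^q` is a first information set of player `i` after action `a`
(every history in `I_i^q` contains `a`, with no later action of `a` lying in any action set
of player `i`). -/
def FirstAfter (i : Fin G.n) (a : ℕ) (q : ℕ) : Prop :=
  q < G.m i ∧ ∀ h ∈ G.Info i q, ∃ l₁ l₂ : List ℕ,
    h = l₁ ++ a :: l₂ ∧ ∀ b ∈ l₂, ∀ p < G.m i, b ∉ G.infoA i p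

/-- `q ∈ M(I_i^j) = ∪_{a ∈ A(I_i^j)} M(a, I_i^j)`. -/
def MInfo (i : Fin G.n) (j : ℕ) (q : ℕ) : Prop := ∃ a ∈ G.infoA i j, G.FirstAfter i a q

/-- `q ∈ Λ(a, I_i^j)`: every history in `I_i^q` contains the action `a`. -/
def LambdaSet (i : Fin G.n) (a : ℕ) (q : ℕ) : Prop :=
  q < G.m i ∧ ∀ h ∈ G.Info i q, ∃ l₁ l₂ : List ℕ, h = l₁ ++ a :: l₂

/-- `ϱ^i_{I_i^j}(β, β̃)`: replace player `i`'s component of `β` by that of `β̃` at every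
information set `I_i^q` such that some history in `I_i^q` contains an action of `A(I_i^j)`. -/
def rho (i : Fin G.n) (j : ℕ) (β βt : G.Profile) : G.Profile := fun p q =>
  if p = i ∧ ∃ h ∈ G.Info i q, ∃ b ∈ h, b ∈ G.infoA i j then βt i q else β p q

/-- A belief system: a probability distribution on each information set. -/
def IsBelief (μ : G.Belief) : Prop :=
  ∀ (i : Fin G.n) (j : ℕ), j < G.m i →
    (∀ h ∈ G.Info i j, 0 ≤ μ i j h) ∧ ∑ h ∈ G.Info i j, μ i j h = 1

/-- A self-independent belief system for `β`:
`S^i(I_i^j|β) · μ^i_{I_i^j}(h) = S^i(h|β)`. -/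
def SelfIndep (β : G.Profile) (μ : G.Belief) : Prop :=
  ∀ (i : Fin G.n) (j : ℕ), j < G.m i → ∀ h ∈ G.Info i j,
    G.SInfo i j β * μ i j h = G.Sh i β h

/-- Auxiliary for `ν`: scan `rest` from `pre` for the subhistory lying in `I_i^j`, then
weight by the belief and multiply the move probabilities of the remaining moves (the move
taken at the subhistory itself being skipped). -/
def nuAux (i : Fin G.n) (j : ℕ) (β : G.Profile) (w : List ℕ → ℝ) : List ℕ → List ℕ → ℝ
  | _, [] => 0
  | pre, b :: rest =>
    if pre ∈ G.Info i j then w pre * G.prodAlong β (pre ++ [b]) rest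
    else nuAux i j β w (pre ++ [b]) rest

/-- `ν^i_{I_i^j}(h | a, β^{-I_i^j}, μ)` (it does not involve the component of `β` at
`I_i^j`). -/
def nu (i : Fin G.n) (j : ℕ) (β : G.Profile) (μ : G.Belief) (h : List ℕ) : ℝ :=
  G.nuAux i j β (μ i j) [] h

/-- `u^i((a, β^{-I_i^j}) ∧ I_i^j)`. -/
def uWedgeAct (i : Fin G.n) (j : ℕ) (a : ℕ) (β : G.Profile) : ℝ :=
  ∑ h ∈ G.Zset.filter (fun h => a ∈ h), G.u i h * G.prodAlongSkip i j β [] h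

/-- `u^i(β ∧ I_i^j)`. -/
def uWedge (i : Fin G.n) (j : ℕ) (β : G.Profile) : ℝ :=
  ∑ h ∈ G.Zset.filter (fun h => ∃ b ∈ h, b ∈ G.infoA i j), G.u i h * G.omega β h

/-- The conditional expected payoff `u^i(a, β^{-I_i^j}, μ | I_i^j)`. -/
def uCond (i : Fin G.n) (j : ℕ) (a : ℕ) (β : G.Profile) (μ : G.Belief) : ℝ :=
  ∑ h ∈ G.Zset.filter (fun h => a ∈ h), G.u i h * G.nu i j β μ h

/-- The expected payoff `u^i(β)`. -/
def uExp (i : Fin G.n) (β : G.Profile) : ℝ := ∑ h ∈ G.Zset, G.u i h * G.omega β h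

/-- The profile obtained from `β` by replacing all of player `i`'s components by `b`. -/
def replace (β : G.Profile) (i : Fin G.n) (b : ℕ → ℕ → ℝ) : G.Profile :=
  fun p => if p = i then b else β p

/-- `β` is a Nash equilibrium in behavioral strategies. -/
def IsNash (β : G.Profile) : Prop :=
  G.IsBehProfile β ∧ ∀ (i : Fin G.n) (b : ℕ → ℕ → ℝ), G.IsBehStrategy i b →
    G.uExp i (G.replace β i b) ≤ G.uExp i β

/-- `(β, β̃, μ)` satisfies the Nash characterization (Definition 2 of the paper). -/
def NashChar (β βt : G.Profile) (μ : G.Belief) : Prop :=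
  (∀ (i : Fin G.n) (j : ℕ), j < G.m i → ∀ a' ∈ G.infoA i j, ∀ a'' ∈ G.infoA i j,
    G.uWedgeAct i j a' (G.rho i j β βt) < G.uWedgeAct i j a'' (G.rho i j β βt) →
    β i j a' = 0) ∧
  (∀ (i : Fin G.n) (j : ℕ), j < G.m i → ∀ a' ∈ G.infoA i j, ∀ a'' ∈ G.infoA i j,
    G.uCond i j a' (G.rho i j β βt) μ < G.uCond i j a'' (G.rho i j β βt) μ →
    βt i j a' = 0) ∧
  G.IsBelief μ ∧ G.SelfIndep β μ

/-- `r` is the root of a subgame: every information set lies entirely inside or entirely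
outside the set of histories extending `r`. -/
def IsSubgameRoot (r : List ℕ) : Prop :=
  r ∈ G.H ∧ ∀ (i : Fin G.n) (j : ℕ), j < G.m i →
    (∀ h ∈ G.Info i j, r <+: h) ∨ ∀ h ∈ G.Info i j, ¬ r <+: h

/-- The depth `g` of the smallest subgame containing `A(I_i^j)` (the length of the longest
subgame root preceding every history of `I_i^j`). -/
def sgDepthInfo (i : Fin G.n) (j : ℕ) : ℕ :=
  (G.H.filter fun r => G.IsSubgameRoot r ∧ ∀ h ∈ G.Info i j, r <+: h).sup List.length

/-- The depth `q(h)` of the smallest subgame containing the last action of `h`. -/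
def sgDepthHist (h : List ℕ) : ℕ :=
  (G.H.filter fun r => G.IsSubgameRoot r ∧ r <+: h.dropLast).sup List.length

/-- `C^i_{I_i^j}(h|β)`: product of move probabilities along `h` within the smallest subgame
containing `A(I_i^j)`. -/
def Ch (i : Fin G.n) (j : ℕ) (β : G.Profile) (h : List ℕ) : ℝ :=
  G.prodAlong β (h.take (G.sgDepthInfo i j)) (h.drop (G.sgDepthInfo i j))

/-- `C^i_{I_i^j}(I_i^j|β)`. -/
def CInfo (i : Fin G.n) (j : ℕ) (β : G.Profile) : ℝ := ∑ h ∈ G.Info i j, G.Ch i j β h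

/-- `u^i((a, β^{-I_i^j}) ⋄ I_i^j)`. -/
def uDiamondAct (i : Fin G.n) (j : ℕ) (a : ℕ) (β : G.Profile) : ℝ :=
  ∑ h ∈ G.Zset.filter (fun h => a ∈ h), G.u i h *
    G.prodAlongSkip i j β (h.take (G.sgDepthInfo i j)) (h.drop (G.sgDepthInfo i j))

/-- `Y^i(h|β)`: like `S^i(h|β)` but within the smallest subgame containing the last action
of `h`. -/
def Yh (i : Fin G.n) (β : G.Profile) (h : List ℕ) : ℝ :=
  G.prodAlongNot i β (h.take (G.sgDepthHist h)) (h.drop (G.sgDepthHist h))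

/-- `Y^i(I_i^j|β)`. -/
def YInfo (i : Fin G.n) (j : ℕ) (β : G.Profile) : ℝ := ∑ h ∈ G.Info i j, G.Yh i β h

/-- The belief condition `Y^i(I_i^j|β) · μ^i_{I_i^j}(h) = Y^i(h|β)`. -/
def YConsistent (β : G.Profile) (μ : G.Belief) : Prop :=
  ∀ (i : Fin G.n) (j : ℕ), j < G.m i → ∀ h ∈ G.Info i j,
    G.YInfo i j β * μ i j h = G.Yh i β h

/-- The expected payoff of player `i` in the subgame rooted at `r` (payoffs of terminal
histories extending `r`, weighted by the move probabilities within the subgame). -/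
def uExpFrom (i : Fin G.n) (β : G.Profile) (r : List ℕ) : ℝ :=
  ∑ h ∈ G.Zset.filter (fun h => r <+: h), G.u i h * G.prodAlong β r (h.drop r.length)

/-- `β` is a subgame perfect equilibrium in behavioral strategies: its restriction to every
subgame is a Nash equilibrium in behavioral strategies of that subgame. -/
def IsSubgamePerfect (β : G.Profile) : Prop :=
  G.IsBehProfile β ∧ ∀ r : List ℕ, G.IsSubgameRoot r →
    ∀ (i : Fin G.n) (b : ℕ → ℕ → ℝ), G.IsBehStrategy i b →
      G.uExpFrom i (G.replace β i b) r ≤ G.uExpFrom i β r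

/-- `(β, β̃, μ)` satisfies the subgame perfect characterization (Definition 6 of the
paper). -/
def SubgameChar (β βt : G.Profile) (μ : G.Belief) : Prop :=
  (∀ (i : Fin G.n) (j : ℕ), j < G.m i → ∀ a' ∈ G.infoA i j, ∀ a'' ∈ G.infoA i j,
    G.uDiamondAct i j a' (G.rho i j β βt) < G.uDiamondAct i j a'' (G.rho i j β βt) →
    β i j a' = 0) ∧
  (∀ (i : Fin G.n) (j : ℕ), j < G.m i → ∀ a' ∈ G.infoA i j, ∀ a'' ∈ G.infoA i j,
    G.uCond i j a' (G.rho i j β βt) μ < G.uCond i j a'' (G.rho i j β βt) μ →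
    βt i j a' = 0) ∧
  G.IsBelief μ ∧ G.YConsistent β μ

/-- `(β, μ)` is a semi-sequential equilibrium. -/
def SemiSeqEq (β : G.Profile) (μ : G.Belief) : Prop :=
  G.IsBehProfile β ∧ G.IsBelief μ ∧ G.SelfIndep β μ ∧
  ∀ (i : Fin G.n) (j : ℕ), j < G.m i → ∀ a' ∈ G.infoA i j, ∀ a'' ∈ G.infoA i j,
    G.uCond i j a' β μ < G.uCond i j a'' β μ → β i j a' = 0

/-- `(β, μ)` is a subgame perfect semi-sequential equilibrium. -/
def SubgameSemiSeqEq (β : G.Profile) (μ : G.Belief) : Prop :=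
  G.IsBehProfile β ∧ G.IsBelief μ ∧ G.YConsistent β μ ∧
  ∀ (i : Fin G.n) (j : ℕ), j < G.m i → ∀ a' ∈ G.infoA i j, ∀ a'' ∈ G.infoA i j,
    G.uCond i j a' β μ < G.uCond i j a'' β μ → β i j a' = 0

/-- `d(I_i^j)`: the number of information sets of player `i` containing a prefix of some
history of `I_i^j` (counting `I_i^j` itself). -/
def dInfo (i : Fin G.n) (j : ℕ) : ℕ :=
  ((Finset.range (G.m i)).filter
    (fun q => ∃ h ∈ G.Info i j, ∃ p : List ℕ, p <+: h ∧ p ∈ G.Info i q)).card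

end EFG

/-! Player `i`'s gain from replacing `β` by a deviation `γ` telescopes along the game tree: it is
the sum over all histories `h` of `ω(h|γ)` times the one-shot gain at `h`, the continuation being
valued under `β`. Only the histories at which `i` moves contribute. Under perfect recall player
`i`'s own factor of `ω(h|γ)` is constant on an information set `I`, so there `ω(h|γ)` is
proportional to `S^i(h|β) = S^i(I|β) μ(h)`. The contribution of `I` is therefore a nonnegative
multiple of the gain in conditional expected payoff at `I`, and this gain is nonpositive because `β`
is supported on conditionally optimal actions. Where `S^i(I|β) = 0` the multiple vanishes, so
optimality matters only at the information sets that the other players and chance allow. -/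

theorem sum_mul_le_sum_mul_of_eq_zero_of_lt {ι R : Type*} [Semiring R] [LinearOrder R]
    [IsOrderedRing R] {s : Finset ι} {p q U : ι → R} (hp : ∀ a ∈ s, 0 ≤ p a)
    (hpq : ∑ a ∈ s, p a = ∑ a ∈ s, q a)
    (hq : ∀ a' ∈ s, ∀ a'' ∈ s, U a' < U a'' → q a' = 0) :
    ∑ a ∈ s, p a * U a ≤ ∑ a ∈ s, q a * U a := by
  obtain rfl | hs := s.eq_empty_or_nonempty
  · rfl
  obtain ⟨m, hm, hmax⟩ := s.exists_max_image U hs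
  calc ∑ a ∈ s, p a * U a
      ≤ ∑ a ∈ s, p a * U m :=
        Finset.sum_le_sum fun a ha => mul_le_mul_of_nonneg_left (hmax a ha) (hp a ha)
    _ = ∑ a ∈ s, q a * U m := by rw [← Finset.sum_mul, hpq, Finset.sum_mul]
    _ = ∑ a ∈ s, q a * U a := Finset.sum_congr rfl fun a ha => by
        obtain hlt | heq := (hmax a ha).lt_or_eq
        · rw [hq a ha m hm hlt, zero_mul, zero_mul]
        · rw [heq]

namespace EFG

variable {G : EFG} {i : Fin G.n} {j a : ℕ} {h h' z : List ℕ} {β : G.Profile} {μ : G.Belief}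
  {b : ℕ → ℕ → ℝ}

theorem mem_H_of_prefix (hz : z ∈ G.H) (hp : h <+: z) : h ∈ G.H :=
  G.prefixClosed z hz h hp

theorem mem_H_of_mem_Zset (hz : z ∈ G.Zset) : z ∈ G.H :=
  (Finset.mem_filter.1 hz).1

theorem mem_A : a ∈ G.A h ↔ h ++ [a] ∈ G.H :=
  ⟨fun ha => (Finset.mem_filter.1 ha).2, fun ha => Finset.mem_filter.2 ⟨G.act_mem h a ha, ha⟩⟩

theorem A_eq_empty_of_mem_Zset (hz : z ∈ G.Zset) : G.A z = ∅ :=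
  Finset.eq_empty_of_forall_notMem fun a ha => (Finset.mem_filter.1 hz).2 a (mem_A.1 ha)

theorem prefix_of_append_singleton_prefix (hp : h ++ [a] <+: z) : h <+: z :=
  (List.prefix_append h [a]).trans hp

theorem A_eq_infoA (hj : j < G.m i) (hh : h ∈ G.Info i j) : G.A h = G.infoA i j := by
  ext a
  simp only [infoA, Finset.mem_sup, mem_A]
  exact ⟨fun ha => ⟨h, hh, ha⟩, fun ⟨h', hh', ha⟩ => (G.info_actions i j hj h hh h' hh' a).2 ha⟩

theorem infoIdx_lt_and_mem_Info (hP : G.P h = some i) (ha : h ++ [a] ∈ G.H) :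
    G.infoIdx h < G.m i ∧ h ∈ G.Info i (G.infoIdx h) := by
  have hH : h ∈ G.H := mem_H_of_prefix ha (List.prefix_append h [a])
  have hlt := G.infoIdx_lt i h hH hP ⟨a, ha⟩
  exact ⟨hlt, (G.info_spec i _ h hlt).2 ⟨hH, hP, ⟨a, ha⟩, rfl⟩⟩

theorem mem_Info_of_mem_infoA (hj : j < G.m i) (ha : a ∈ G.infoA i j) (hha : h ++ [a] ∈ G.H) :
    h ∈ G.Info i j := by
  obtain ⟨h₀, hh₀⟩ := G.info_nonempty i j hj
  obtain ⟨hH₀, hP₀, -, hidx₀⟩ := (G.info_spec i j h₀ hj).1 hh₀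
  have hH : h ∈ G.H := mem_H_of_prefix hha (List.prefix_append h [a])
  obtain ⟨hP, hidx⟩ := G.act_unique h h₀ a hH hH₀ hha (mem_A.1 (A_eq_infoA hj hh₀ ▸ ha))
  exact (G.info_spec i j h hj).2 ⟨hH, hP.trans hP₀, ⟨a, hha⟩, hidx.trans hidx₀⟩

theorem sum_H_eq_sum_Info {M : Type*} [AddCommMonoid M] {f : List ℕ → M}
    (hP : ∀ h ∈ G.H, G.P h ≠ some i → f h = 0) (hZ : ∀ z ∈ G.Zset, f z = 0) :
    ∑ h ∈ G.H, f h = ∑ j ∈ Finset.range (G.m i), ∑ h ∈ G.Info i j, f h := by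
  rw [← Finset.sum_biUnion]
  · refine (Finset.sum_subset (fun h hh => ?_) fun h hH hh => ?_).symm
    · obtain ⟨j, hj, hh⟩ := Finset.mem_biUnion.1 hh
      exact ((G.info_spec i j h (Finset.mem_range.1 hj)).1 hh).1
    · by_cases hPi : G.P h = some i
      · refine hZ h (Finset.mem_filter.2 ⟨hH, fun a ha => hh ?_⟩)
        obtain ⟨hlt, hmem⟩ := infoIdx_lt_and_mem_Info hPi ha
        exact Finset.mem_biUnion.2 ⟨_, Finset.mem_range.2 hlt, hmem⟩
      · exact hP h hH hPi
  · refine fun j hj k hk hjk => Finset.disjoint_left.2 fun h hhj hhk => hjk ?_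
    obtain ⟨-, -, -, hidxj⟩ := (G.info_spec i j h (Finset.mem_range.1 hj)).1 hhj
    obtain ⟨-, -, -, hidxk⟩ := (G.info_spec i k h (Finset.mem_range.1 hk)).1 hhk
    exact hidxj.symm.trans hidxk

section MoveProbabilities

theorem moveProb_of_P_eq_some (hP : G.P h = some i) (β : G.Profile) (a : ℕ) :
    G.moveProb β h a = β i (G.infoIdx h) a := by
  simp only [moveProb, hP, Option.elim_some]

theorem replace_self (β : G.Profile) (i : Fin G.n) (b : ℕ → ℕ → ℝ) : G.replace β i b i = b :=
  if_pos rfl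

theorem moveProb_replace_of_P_ne (hP : G.P h ≠ some i) (β : G.Profile) (b : ℕ → ℕ → ℝ) (a : ℕ) :
    G.moveProb (G.replace β i b) h a = G.moveProb β h a := by
  cases hk : G.P h with
  | none => simp only [moveProb, hk, Option.elim_none]
  | some k =>
    have hne : k ≠ i := fun hki => hP (hki ▸ hk)
    simp only [moveProb, hk, Option.elim_some, replace, if_neg hne]

theorem IsBehStrategy.nonneg (hb : G.IsBehStrategy i b) (hP : G.P h = some i)
    (ha : h ++ [a] ∈ G.H) : 0 ≤ b (G.infoIdx h) a := by
  obtain ⟨hlt, hmem⟩ := infoIdx_lt_and_mem_Info hP ha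
  exact (hb _ hlt).1 a (A_eq_infoA hlt hmem ▸ mem_A.2 ha)

theorem IsBehProfile.moveProb_nonneg (hβ : G.IsBehProfile β) (ha : h ++ [a] ∈ G.H) :
    0 ≤ G.moveProb β h a := by
  cases hP : G.P h with
  | none => simpa only [moveProb, hP, Option.elim_none] using G.fc_nonneg h a
  | some k => simpa only [moveProb_of_P_eq_some hP] using (hβ k).nonneg hP ha

theorem prodAlong_append (β : G.Profile) (p l₁ l₂ : List ℕ) :
    G.prodAlong β p (l₁ ++ l₂) = G.prodAlong β p l₁ * G.prodAlong β (p ++ l₁) l₂ := by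
  induction l₁ generalizing p with
  | nil => simp [prodAlong]
  | cons c l ih => simp [prodAlong, ih, mul_assoc]

theorem prodAlongNot_append (i : Fin G.n) (β : G.Profile) (p l₁ l₂ : List ℕ) :
    G.prodAlongNot i β p (l₁ ++ l₂) =
      G.prodAlongNot i β p l₁ * G.prodAlongNot i β (p ++ l₁) l₂ := by
  induction l₁ generalizing p with
  | nil => simp [prodAlongNot]
  | cons c l ih => simp [prodAlongNot, ih, mul_assoc]

theorem recordFrom_append (i : Fin G.n) (p l₁ l₂ : List ℕ) :
    G.recordFrom i p (l₁ ++ l₂) = G.recordFrom i p l₁ ++ G.recordFrom i (p ++ l₁) l₂ := by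
  induction l₁ generalizing p with
  | nil => simp [recordFrom]
  | cons c l ih => simp [recordFrom, ih]

theorem omega_append_singleton (β : G.Profile) (h : List ℕ) (a : ℕ) :
    G.omega β (h ++ [a]) = G.omega β h * G.moveProb β h a := by
  simp [omega, prodAlong_append, prodAlong]

theorem Sh_append_singleton (i : Fin G.n) (β : G.Profile) (h : List ℕ) (a : ℕ) :
    G.Sh i β (h ++ [a]) = G.Sh i β h * if G.P h = some i then 1 else G.moveProb β h a := by
  simp [Sh, prodAlongNot_append, prodAlongNot]

variable (G) in
/-- The realization weight of player `i`'s strategy `b` at `h`: the probability that `b` takes all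
the actions of player `i` along `h`. It is read off the record `X_i(h)`, so that perfect recall
makes it constant on the information sets of player `i`. -/
def realizationWeight (i : Fin G.n) (b : ℕ → ℕ → ℝ) (h : List ℕ) : ℝ :=
  ((G.recordFrom i [] h).map fun p => b p.1 p.2).prod

theorem realizationWeight_append_singleton (i : Fin G.n) (b : ℕ → ℕ → ℝ) (h : List ℕ) (a : ℕ) :
    G.realizationWeight i b (h ++ [a]) =
      G.realizationWeight i b h * if G.P h = some i then b (G.infoIdx h) a else 1 := by
  simp only [realizationWeight, recordFrom_append, recordFrom, List.nil_append]
  split_ifs <;> simp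

theorem omega_replace (β : G.Profile) (i : Fin G.n) (b : ℕ → ℕ → ℝ) (h : List ℕ) :
    G.omega (G.replace β i b) h = G.realizationWeight i b h * G.Sh i β h := by
  induction h using List.reverseRecOn with
  | nil => simp [omega, prodAlong, realizationWeight, recordFrom, Sh, prodAlongNot]
  | append_singleton h a ih =>
    rw [omega_append_singleton, realizationWeight_append_singleton, Sh_append_singleton, ih]
    split_ifs with hP
    · rw [moveProb_of_P_eq_some hP, replace_self]
      ring
    · rw [moveProb_replace_of_P_ne hP]
      ring

theorem IsBehStrategy.realizationWeight_nonneg (hb : G.IsBehStrategy i b) (hh : h ∈ G.H) :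
    0 ≤ G.realizationWeight i b h := by
  induction h using List.reverseRecOn with
  | nil => simp [realizationWeight, recordFrom]
  | append_singleton h a ih =>
    rw [realizationWeight_append_singleton]
    refine mul_nonneg (ih (mem_H_of_prefix hh (List.prefix_append h [a]))) ?_
    split_ifs with hP
    · exact hb.nonneg hP hh
    · exact zero_le_one

theorem IsBehProfile.Sh_nonneg (hβ : G.IsBehProfile β) (i : Fin G.n) (hh : h ∈ G.H) :
    0 ≤ G.Sh i β h := by
  induction h using List.reverseRecOn with
  | nil => simp [Sh, prodAlongNot]
  | append_singleton h a ih =>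
    rw [Sh_append_singleton]
    refine mul_nonneg (ih (mem_H_of_prefix hh (List.prefix_append h [a]))) ?_
    split_ifs
    · exact zero_le_one
    · exact hβ.moveProb_nonneg hh

theorem IsBehProfile.SInfo_nonneg (hβ : G.IsBehProfile β) (hj : j < G.m i) :
    0 ≤ G.SInfo i j β :=
  Finset.sum_nonneg fun h hh => hβ.Sh_nonneg i ((G.info_spec i j h hj).1 hh).1

end MoveProbabilities

section OneShotGain

theorem uExpFrom_nil (i : Fin G.n) (β : G.Profile) : G.uExpFrom i β [] = G.uExp i β := by
  simp [uExpFrom, uExp, omega]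

theorem uExpFrom_of_mem_Zset (i : Fin G.n) (β : G.Profile) (hz : z ∈ G.Zset) :
    G.uExpFrom i β z = G.u i z := by
  have hext : G.Zset.filter (fun w => z <+: w) = {z} := by
    ext w
    simp only [Finset.mem_filter, Finset.mem_singleton]
    constructor
    · rintro ⟨hw, l, rfl⟩
      cases l with
      | nil => simp
      | cons a l =>
        exact absurd (mem_H_of_prefix (mem_H_of_mem_Zset hw) ⟨l, by simp⟩)
          ((Finset.mem_filter.1 hz).2 a)
    · rintro rfl
      exact ⟨hz, List.prefix_rfl⟩
  simp [uExpFrom, hext, prodAlong]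

theorem filter_prefix_Zset_eq_biUnion (hh : h ∉ G.Zset) :
    G.Zset.filter (fun z => h <+: z) =
      (G.A h).biUnion fun a => G.Zset.filter fun z => h ++ [a] <+: z := by
  ext z
  simp only [Finset.mem_biUnion, Finset.mem_filter, mem_A]
  constructor
  · rintro ⟨hz, l, rfl⟩
    cases l with
    | nil => exact absurd (by simpa using hz) hh
    | cons a l =>
      have hp : h ++ [a] <+: h ++ a :: l := ⟨l, by simp⟩
      exact ⟨a, mem_H_of_prefix (mem_H_of_mem_Zset hz) hp, hz, hp⟩
  · rintro ⟨a, -, hz, hp⟩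
    exact ⟨hz, prefix_of_append_singleton_prefix hp⟩

theorem uExpFrom_eq_sum_A (i : Fin G.n) (β : G.Profile) (hh : h ∉ G.Zset) :
    G.uExpFrom i β h = ∑ a ∈ G.A h, G.moveProb β h a * G.uExpFrom i β (h ++ [a]) := by
  rw [uExpFrom, filter_prefix_Zset_eq_biUnion hh, Finset.sum_biUnion]
  · refine Finset.sum_congr rfl fun a _ => ?_
    rw [uExpFrom, Finset.mul_sum]
    refine Finset.sum_congr rfl fun z hz => ?_
    obtain ⟨l, rfl⟩ := (Finset.mem_filter.1 hz).2
    have hdrop : (h ++ [a] ++ l).drop h.length = a :: l := by simp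
    rw [hdrop, List.drop_left, prodAlong, mul_left_comm]
  · refine fun a _ c _ hac => Finset.disjoint_left.2 fun z ha hc => hac ?_
    have heq : h ++ [a] = h ++ [c] :=
      (List.prefix_of_prefix_length_le (Finset.mem_filter.1 ha).2 (Finset.mem_filter.1 hc).2
        (by simp)).eq_of_length (by simp)
    simpa using heq

theorem sum_H_sum_A_append_singleton {M : Type*} [AddCommMonoid M] (f : List ℕ → M) :
    ∑ h ∈ G.H, ∑ a ∈ G.A h, f (h ++ [a]) = ∑ h ∈ G.H.erase [], f h := by
  rw [Finset.sum_sigma']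
  refine Finset.sum_nbij (fun p => p.1 ++ [p.2]) ?_ ?_ ?_ fun _ _ => rfl
  · rintro ⟨h, a⟩ hp
    exact Finset.mem_erase.2 ⟨by simp, mem_A.1 (Finset.mem_sigma.1 hp).2⟩
  · rintro ⟨h, a⟩ - ⟨h', a'⟩ - heq
    obtain ⟨rfl, rfl⟩ : h = h' ∧ a = a' := by simpa using heq
    rfl
  · intro z hz
    obtain ⟨hne, hzH⟩ := Finset.mem_erase.1 hz
    obtain ⟨h, a, rfl⟩ := (List.eq_nil_or_concat' z).resolve_left hne
    exact ⟨⟨h, a⟩, Finset.mem_sigma.2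
      ⟨mem_H_of_prefix hzH (List.prefix_append h [a]), mem_A.2 hzH⟩, rfl⟩

theorem sum_Zset_sub_apply_nil {M : Type*} [AddCommGroup M] (f : List ℕ → M) :
    ∑ z ∈ G.Zset, f z - f [] = ∑ h ∈ G.H \ G.Zset, (∑ a ∈ G.A h, f (h ++ [a]) - f h) := by
  have hsub : G.Zset ⊆ G.H := Finset.filter_subset _ _
  have hchildren : ∑ h ∈ G.H \ G.Zset, ∑ a ∈ G.A h, f (h ++ [a]) = ∑ h ∈ G.H.erase [], f h := by
    rw [← sum_H_sum_A_append_singleton, ← Finset.sum_sdiff hsub, left_eq_add]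
    exact Finset.sum_eq_zero fun z hz => by rw [A_eq_empty_of_mem_Zset hz, Finset.sum_empty]
  rw [Finset.sum_sub_distrib, hchildren, Finset.sum_erase_eq_sub G.empty_mem,
    ← Finset.sum_sdiff hsub]
  abel

variable (G) in
/-- Player `i`'s one-shot gain at `h`: the change in expected payoff, conditional on `h`, from
drawing the move at `h` from `γ` instead of `β`, all the following moves being drawn from `β`. The
continuation value is `uExpFrom`, which makes sense at every history and not just at subgame
roots. -/
def oneShotGain (i : Fin G.n) (γ β : G.Profile) (h : List ℕ) : ℝ :=
  ∑ a ∈ G.A h, (G.moveProb γ h a - G.moveProb β h a) * G.uExpFrom i β (h ++ [a])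

theorem oneShotGain_of_mem_Zset (i : Fin G.n) (γ β : G.Profile) (hz : z ∈ G.Zset) :
    G.oneShotGain i γ β z = 0 := by
  rw [oneShotGain, A_eq_empty_of_mem_Zset hz, Finset.sum_empty]

theorem oneShotGain_replace_of_P_ne (hP : G.P h ≠ some i) (β : G.Profile) (b : ℕ → ℕ → ℝ) :
    G.oneShotGain i (G.replace β i b) β h = 0 :=
  Finset.sum_eq_zero fun a _ => by rw [moveProb_replace_of_P_ne hP, sub_self, zero_mul]

theorem oneShotGain_replace_of_mem_Info (hj : j < G.m i) (hh : h ∈ G.Info i j) (β : G.Profile)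
    (b : ℕ → ℕ → ℝ) :
    G.oneShotGain i (G.replace β i b) β h =
      ∑ a ∈ G.infoA i j, (b j a - β i j a) * G.uExpFrom i β (h ++ [a]) := by
  obtain ⟨-, hP, -, hidx⟩ := (G.info_spec i j h hj).1 hh
  simp only [oneShotGain, A_eq_infoA hj hh, moveProb_of_P_eq_some hP, hidx, replace_self]

theorem uExp_sub_uExp (i : Fin G.n) (γ β : G.Profile) :
    G.uExp i γ - G.uExp i β = ∑ h ∈ G.H, G.omega γ h * G.oneShotGain i γ β h := by
  set f : List ℕ → ℝ := fun h => G.omega γ h * G.uExpFrom i β h with hf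
  have hZ : ∑ z ∈ G.Zset, f z = G.uExp i γ := Finset.sum_congr rfl fun z hz => by
    simp only [hf, uExpFrom_of_mem_Zset i β hz, omega, mul_comm]
  have hnil : f [] = G.uExp i β := by
    simp only [hf, uExpFrom_nil, omega, prodAlong, one_mul]
  have hstep : ∀ h ∈ G.H \ G.Zset,
      ∑ a ∈ G.A h, f (h ++ [a]) - f h = G.omega γ h * G.oneShotGain i γ β h := fun h hh => by
    simp only [hf, omega_append_singleton, mul_assoc, ← Finset.mul_sum, oneShotGain, sub_mul,
      Finset.sum_sub_distrib, uExpFrom_eq_sum_A i β (Finset.mem_sdiff.1 hh).2, mul_sub]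
  rw [← hZ, ← hnil, sum_Zset_sub_apply_nil, Finset.sum_congr rfl hstep]
  refine Finset.sum_subset Finset.sdiff_subset fun h hh hn => ?_
  have hz : h ∈ G.Zset := by simpa [hh] using hn
  rw [oneShotGain_of_mem_Zset i γ β hz, mul_zero]

theorem uExp_replace_sub_uExp (β : G.Profile) (i : Fin G.n) (b : ℕ → ℕ → ℝ) :
    G.uExp i (G.replace β i b) - G.uExp i β =
      ∑ j ∈ Finset.range (G.m i), ∑ h ∈ G.Info i j,
        G.omega (G.replace β i b) h * G.oneShotGain i (G.replace β i b) β h := by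
  rw [uExp_sub_uExp]
  refine sum_H_eq_sum_Info (fun h _ hP => ?_) fun z hz => ?_
  · rw [oneShotGain_replace_of_P_ne hP, mul_zero]
  · rw [oneShotGain_of_mem_Zset _ _ _ hz, mul_zero]

end OneShotGain

section ConditionalPayoffs

theorem PerfectRecall.realizationWeight_eq (hPR : G.PerfectRecall) (hj : j < G.m i)
    (hh : h ∈ G.Info i j) (hh' : h' ∈ G.Info i j) (b : ℕ → ℕ → ℝ) :
    G.realizationWeight i b h = G.realizationWeight i b h' := by
  rw [realizationWeight, realizationWeight, hPR i j hj h hh h' hh']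

theorem PerfectRecall.eq_of_prefix (hPR : G.PerfectRecall) (hj : j < G.m i)
    (hh : h ∈ G.Info i j) (hh' : h' ∈ G.Info i j) (hp : h <+: h') : h = h' := by
  obtain ⟨l, rfl⟩ := hp
  cases l with
  | nil => simp
  | cons c l =>
    have hP : G.P h = some i := ((G.info_spec i j h hj).1 hh).2.1
    have hrec := hPR i j hj _ hh _ hh'
    simp [recordFrom_append, recordFrom, hP] at hrec

theorem PerfectRecall.eq_of_prefix_of_prefix (hPR : G.PerfectRecall) (hj : j < G.m i)
    (hh : h ∈ G.Info i j) (hh' : h' ∈ G.Info i j) (hp : h <+: z) (hp' : h' <+: z) : h = h' :=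
  (List.prefix_or_prefix_of_prefix hp hp').elim (hPR.eq_of_prefix hj hh hh')
    fun hp => (hPR.eq_of_prefix hj hh' hh hp).symm

theorem nuAux_append_cons (β : G.Profile) (w : List ℕ → ℝ) {p l₁ : List ℕ}
    (hmem : p ++ l₁ ∈ G.Info i j)
    (hfirst : ∀ l, l <+: l₁ → p ++ l ∈ G.Info i j → l = l₁) (a : ℕ) (l₂ : List ℕ) :
    G.nuAux i j β w p (l₁ ++ a :: l₂) = w (p ++ l₁) * G.prodAlong β (p ++ l₁ ++ [a]) l₂ := by
  induction l₁ generalizing p with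
  | nil =>
    rw [List.append_nil] at hmem
    simp [nuAux, hmem]
  | cons c l₁ ih =>
    have hp : p ∉ G.Info i j := fun hp => by simpa using hfirst [] List.nil_prefix (by simpa)
    have htail := ih (p := p ++ [c]) (by simpa using hmem) fun l hl hpl => by
      simpa using hfirst (c :: l) (by simpa using hl) (by simpa using hpl)
    simpa [nuAux, hp] using htail

theorem PerfectRecall.nu_append_cons (hPR : G.PerfectRecall) (hj : j < G.m i)
    (hh : h ∈ G.Info i j) (β : G.Profile) (μ : G.Belief) (a : ℕ) (l : List ℕ) :
    G.nu i j β μ (h ++ a :: l) = μ i j h * G.prodAlong β (h ++ [a]) l :=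
  nuAux_append_cons β (μ i j) (p := []) hh (fun _ hp hmem => hPR.eq_of_prefix hj hmem hh hp) a l

theorem filter_mem_Zset_eq_biUnion (hj : j < G.m i) (ha : a ∈ G.infoA i j) :
    G.Zset.filter (fun z => a ∈ z) =
      (G.Info i j).biUnion fun h => G.Zset.filter fun z => h ++ [a] <+: z := by
  ext z
  simp only [Finset.mem_biUnion, Finset.mem_filter]
  constructor
  · rintro ⟨hz, haz⟩
    obtain ⟨h, l, rfl⟩ := List.append_of_mem haz
    have hp : h ++ [a] <+: h ++ a :: l := ⟨l, by simp⟩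
    exact ⟨h, mem_Info_of_mem_infoA hj ha (mem_H_of_prefix (mem_H_of_mem_Zset hz) hp), hz, hp⟩
  · rintro ⟨h, -, hz, hp⟩
    exact ⟨hz, hp.subset (by simp)⟩

theorem PerfectRecall.uCond_eq_sum_Info (hPR : G.PerfectRecall) (hj : j < G.m i)
    (ha : a ∈ G.infoA i j) (β : G.Profile) (μ : G.Belief) :
    G.uCond i j a β μ = ∑ h ∈ G.Info i j, μ i j h * G.uExpFrom i β (h ++ [a]) := by
  rw [uCond, filter_mem_Zset_eq_biUnion hj ha, Finset.sum_biUnion]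
  · refine Finset.sum_congr rfl fun h hh => ?_
    rw [uExpFrom, Finset.mul_sum]
    refine Finset.sum_congr rfl fun z hz => ?_
    obtain ⟨l, rfl⟩ := (Finset.mem_filter.1 hz).2
    rw [List.drop_left, List.append_assoc, List.singleton_append, hPR.nu_append_cons hj hh,
      mul_left_comm]
  · refine fun h hh h' hh' hne => Finset.disjoint_left.2 fun z hz hz' => hne ?_
    exact hPR.eq_of_prefix_of_prefix hj hh hh'
      (prefix_of_append_singleton_prefix (Finset.mem_filter.1 hz).2)
      (prefix_of_append_singleton_prefix (Finset.mem_filter.1 hz').2)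

theorem PerfectRecall.sum_Info_Sh_mul_uExpFrom (hPR : G.PerfectRecall) (hμ : G.SelfIndep β μ)
    (hj : j < G.m i) (ha : a ∈ G.infoA i j) :
    ∑ h ∈ G.Info i j, G.Sh i β h * G.uExpFrom i β (h ++ [a]) =
      G.SInfo i j β * G.uCond i j a β μ := by
  rw [hPR.uCond_eq_sum_Info hj ha, Finset.mul_sum]
  exact Finset.sum_congr rfl fun h hh => by rw [← hμ i j hj h hh, mul_assoc]

theorem PerfectRecall.sum_Info_omega_mul_oneShotGain (hPR : G.PerfectRecall)
    (hμ : G.SelfIndep β μ) (hj : j < G.m i) (hh : h ∈ G.Info i j) (b : ℕ → ℕ → ℝ) :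
    ∑ h' ∈ G.Info i j, G.omega (G.replace β i b) h' * G.oneShotGain i (G.replace β i b) β h' =
      G.realizationWeight i b h * (G.SInfo i j β *
        ∑ a ∈ G.infoA i j, (b j a - β i j a) * G.uCond i j a β μ) := by
  calc ∑ h' ∈ G.Info i j, G.omega (G.replace β i b) h' * G.oneShotGain i (G.replace β i b) β h'
      = ∑ h' ∈ G.Info i j, ∑ a ∈ G.infoA i j, G.realizationWeight i b h *
          ((b j a - β i j a) * (G.Sh i β h' * G.uExpFrom i β (h' ++ [a]))) :=
        Finset.sum_congr rfl fun h' hh' => by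
          rw [omega_replace, oneShotGain_replace_of_mem_Info hj hh',
            hPR.realizationWeight_eq hj hh' hh, Finset.mul_sum]
          exact Finset.sum_congr rfl fun a _ => by ring
    _ = ∑ a ∈ G.infoA i j, G.realizationWeight i b h *
          ((b j a - β i j a) * (G.SInfo i j β * G.uCond i j a β μ)) := by
        rw [Finset.sum_comm]
        refine Finset.sum_congr rfl fun a ha => ?_
        rw [← hPR.sum_Info_Sh_mul_uExpFrom hμ hj ha, Finset.mul_sum, Finset.mul_sum]
    _ = G.realizationWeight i b h * (G.SInfo i j β *
          ∑ a ∈ G.infoA i j, (b j a - β i j a) * G.uCond i j a β μ) := by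
        simp only [Finset.mul_sum, mul_left_comm]

end ConditionalPayoffs

end EFG

theorem stmt15_general (G : EFG) (hPR : G.PerfectRecall)
    (β : G.Profile) (μ : G.Belief) (hβ : G.IsBehProfile β) (hμ : G.SelfIndep β μ)
    (hopt : ∀ (i : Fin G.n) (j : ℕ), j < G.m i → 0 < G.SInfo i j β →
      ∀ a' ∈ G.infoA i j, ∀ a'' ∈ G.infoA i j,
        G.uCond i j a' β μ < G.uCond i j a'' β μ → β i j a' = 0) :
    G.IsNash β := by
  refine ⟨hβ, fun i b hb => ?_⟩
  rw [← sub_nonpos, EFG.uExp_replace_sub_uExp]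
  refine Finset.sum_nonpos fun j hj => ?_
  replace hj : j < G.m i := Finset.mem_range.1 hj
  obtain ⟨h, hh⟩ := G.info_nonempty i j hj
  have hweight : 0 ≤ G.realizationWeight i b h :=
    hb.realizationWeight_nonneg ((G.info_spec i j h hj).1 hh).1
  rw [hPR.sum_Info_omega_mul_oneShotGain hμ hj hh]
  refine mul_nonpos_of_nonneg_of_nonpos hweight ?_
  obtain hS | hS := (hβ.SInfo_nonneg hj).eq_or_lt
  · rw [← hS, zero_mul]
  · have hgain : ∑ a ∈ G.infoA i j, b j a * G.uCond i j a β μ ≤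
        ∑ a ∈ G.infoA i j, β i j a * G.uCond i j a β μ :=
      sum_mul_le_sum_mul_of_eq_zero_of_lt (hb j hj).1 ((hb j hj).2.trans (hβ i j hj).2.symm)
        (hopt i j hj hS)
    simp only [sub_mul, Finset.sum_sub_distrib]
    exact mul_nonpos_of_nonneg_of_nonpos hS.le (sub_nonpos.2 hgain)

/-- A semi-sequential equilibrium yields a Nash equilibrium in behavioral strategies. -/
theorem stmt15 (G : EFG) (hPR : G.PerfectRecall)
    (β : G.Profile) (μ : G.Belief) (hss : G.SemiSeqEq β μ) :
    G.IsNash β := by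
  obtain ⟨hβ, -, hμ, hopt⟩ := hss
  exact stmt15_general G hPR β μ hβ hμ fun i j hj _ => hopt i j hj
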